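/- For every smooth function ψ : ℝ³ → ℂ⁴, Dirac's operator K = β(Id + Σ·L) satisfies K(Kψ) = L²ψ + β(Kψ), and K commutes with β, i.e. β(Kψ) = K(βψ). -/

import Mathlib

noncomputable section

open Matrix

/-- Physical space ℝ³. -/
abbrev E3 := EuclideanSpace ℝ (Fin 3)

/-- The Pauli matrices σ₁, σ₂, σ₃ (indexed by `Fin 3`, with `pauli 0 = σ₁`, etc.). -/
def pauli : Fin 3 → Matrix (Fin 2) (Fin 2) ℂ
  | 0 => !![0, 1; 1, 0]
  | 1 => !![0, -Complex.I; Complex.I, 0]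
  | 2 => !![1, 0; 0, -1]

/-- The 4×4 block matrix `[[A, B], [C, D]]` built from 2×2 blocks. -/
def qblock (A B C D : Matrix (Fin 2) (Fin 2) ℂ) : Matrix (Fin 4) (Fin 4) ℂ :=
  Matrix.reindex finSumFinEquiv finSumFinEquiv (Matrix.fromBlocks A B C D)

/-- The Dirac matrix `β = γ⁰ = [[I₂,0],[0,−I₂]]`. -/
def betaM : Matrix (Fin 4) (Fin 4) ℂ := qblock 1 0 0 (-1)

/-- The spin matrices `Σⱼ = [[σⱼ,0],[0,σⱼ]]` for j = 1,2,3. -/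
def SigM (j : Fin 3) : Matrix (Fin 4) (Fin 4) ℂ := qblock (pauli j) 0 0 (pauli j)

/-- The partial derivative `∂ⱼψ` of a ℂ⁴-valued function on ℝ³. -/
def pd (j : Fin 3) (ψ : E3 → Fin 4 → ℂ) : E3 → Fin 4 → ℂ :=
  fun x => fderiv ℝ ψ x (EuclideanSpace.single j 1)

/-- The orbital angular momentum operator `Lⱼψ = −i (x × ∇ψ)ⱼ` (cyclic indices in `Fin 3`). -/
def Lop (j : Fin 3) (ψ : E3 → Fin 4 → ℂ) : E3 → Fin 4 → ℂ :=
  fun x => (-Complex.I) • (x (j + 1) • pd (j + 2) ψ x - x (j + 2) • pd (j + 1) ψ x)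

/-- The operator `L²ψ = Σⱼ Lⱼ(Lⱼψ)`. -/
def L2op (ψ : E3 → Fin 4 → ℂ) : E3 → Fin 4 → ℂ :=
  fun x => ∑ j, Lop j (Lop j ψ) x

/-- The operator `(Σ·L)ψ = Σⱼ Σⱼ(Lⱼψ)`. -/
def SigL (ψ : E3 → Fin 4 → ℂ) : E3 → Fin 4 → ℂ :=
  fun x => ∑ j, (SigM j).mulVec (Lop j ψ x)

/-- Dirac's operator `Kψ = β(ψ + (Σ·L)ψ)`. -/
def Kop (ψ : E3 → Fin 4 → ℂ) : E3 → Fin 4 → ℂ :=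
  fun x => betaM.mulVec (ψ x + SigL ψ x)

/-!
Up to the factor `-i`, the operator `Lⱼ` differentiates along the linear vector field `x ↦ eⱼ × x`,
so `[Lⱼ, Lⱼ₊₁] = i Lⱼ₊₂` is the Lie bracket relation between infinitesimal rotations. In
`(Σ·L)² = ∑ⱼₖ ΣⱼΣₖ LⱼLₖ` the diagonal terms give `L²`, while `ΣⱼΣⱼ₊₁ = i Σⱼ₊₂ = -Σⱼ₊₁Σⱼ` turns the
off-diagonal ones into `∑ⱼ i Σⱼ₊₂ [Lⱼ, Lⱼ₊₁] = -Σ·L`. Hence `(Σ·L)(1 + Σ·L) = L²`, and since `β`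
commutes with `Σ·L` and `β² = 1`, `K² = β(1 + Σ·L)β(1 + Σ·L) = 1 + Σ·L + L² = βK + L²`.
-/

section PauliTriple

/-- Three elements of a complex algebra satisfying the multiplication table of the Pauli matrices:
`σⱼ² = 1` and `σⱼσⱼ₊₁ = i σⱼ₊₂`, with indices modulo 3. -/
structure IsPauliTriple {A : Type*} [Ring A] [Algebra ℂ A] (σ : Fin 3 → A) : Prop where
  mul_self (j : Fin 3) : σ j * σ j = 1
  mul_succ (j : Fin 3) : σ j * σ (j + 1) = Complex.I • σ (j + 2)

lemma IsPauliTriple.succ_mul {A : Type*} [Ring A] [Algebra ℂ A] {σ : Fin 3 → A}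
    (hσ : IsPauliTriple σ) (j : Fin 3) : σ (j + 1) * σ j = -(Complex.I • σ (j + 2)) := by
  have hj : σ (j + 1) * σ (j + 2) = Complex.I • σ j := by
    have cyclic : j + 1 + 1 = j + 2 ∧ j + 1 + 2 = j := by decide +revert
    simpa only [cyclic] using hσ.mul_succ (j + 1)
  calc σ (j + 1) * σ j
      = -(Complex.I • (σ (j + 1) * (Complex.I • σ j))) := by
        rw [mul_smul_comm, smul_smul, Complex.I_mul_I, neg_one_smul, neg_neg]
    _ = -(Complex.I • (σ (j + 1) * σ (j + 1) * σ (j + 2))) := by rw [← hj, mul_assoc]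
    _ = -(Complex.I • σ (j + 2)) := by rw [hσ.mul_self, one_mul]

lemma sum_sum_eq_sum_diag_add_cyclic {V : Type*} [AddCommMonoid V] (f : Fin 3 → Fin 3 → V) :
    ∑ j, ∑ k, f j k = ∑ j, (f j j + (f j (j + 1) + f (j + 1) j)) := by
  simp only [Fin.sum_univ_three, Fin.reduceAdd, zero_add]
  abel

lemma IsPauliTriple.sum_mulVec_sum_mulVec {n : Type*} [Fintype n] [DecidableEq n]
    {σ : Fin 3 → Matrix n n ℂ} (hσ : IsPauliTriple σ) {v : Fin 3 → n → ℂ}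
    {w : Fin 3 → Fin 3 → n → ℂ}
    (hw : ∀ j, w j (j + 1) - w (j + 1) j = Complex.I • v (j + 2)) :
    ∑ j, σ j *ᵥ ∑ k, σ k *ᵥ w j k = ∑ j, w j j - ∑ j, σ j *ᵥ v j := by
  have off_diagonal (j : Fin 3) :
      (σ j * σ (j + 1)) *ᵥ w j (j + 1) + (σ (j + 1) * σ j) *ᵥ w (j + 1) j =
        -(σ (j + 2) *ᵥ v (j + 2)) := by
    rw [hσ.mul_succ, hσ.succ_mul, neg_mulVec, ← sub_eq_add_neg, ← mulVec_sub, hw, smul_mulVec,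
      mulVec_smul, smul_smul, Complex.I_mul_I, neg_one_smul]
  calc ∑ j, σ j *ᵥ ∑ k, σ k *ᵥ w j k
      = ∑ j, ∑ k, (σ j * σ k) *ᵥ w j k := by simp only [mulVec_sum, mulVec_mulVec]
    _ = ∑ j, (w j j + -(σ (j + 2) *ᵥ v (j + 2))) := by
        simp only [sum_sum_eq_sum_diag_add_cyclic, hσ.mul_self, one_mulVec, off_diagonal]
    _ = ∑ j, w j j - ∑ j, σ (j + 2) *ᵥ v (j + 2) := by
        simp only [← sub_eq_add_neg, Finset.sum_sub_distrib]
    _ = ∑ j, w j j - ∑ j, σ j *ᵥ v j := by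
        rw [← Equiv.sum_comp (Equiv.addRight (2 : Fin 3)) fun j => σ j *ᵥ v j]
        simp only [Equiv.coe_addRight]

lemma isPauliTriple_pauli : IsPauliTriple pauli where
  mul_self j := by
    fin_cases j <;> simp [pauli, one_fin_two]
  mul_succ j := by
    fin_cases j <;> simp [pauli]

end PauliTriple

section DiracMatrices

lemma qblock_mul (A B C D A' B' C' D' : Matrix (Fin 2) (Fin 2) ℂ) :
    qblock A B C D * qblock A' B' C' D' =
      qblock (A * A' + B * C') (A * B' + B * D') (C * A' + D * C') (C * B' + D * D') := by
  simp only [qblock, reindex_apply, submatrix_mul_equiv, fromBlocks_multiply]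

lemma smul_qblock (c : ℂ) (A B C D : Matrix (Fin 2) (Fin 2) ℂ) :
    c • qblock A B C D = qblock (c • A) (c • B) (c • C) (c • D) := by
  simp only [qblock, reindex_apply, ← fromBlocks_smul, submatrix_smul, Pi.smul_apply]

lemma qblock_one : qblock 1 0 0 1 = 1 := by
  simp only [qblock, fromBlocks_one, reindex_apply, submatrix_one_equiv]

lemma betaM_mul_self : betaM * betaM = 1 := by
  simp [betaM, qblock_mul, qblock_one]

lemma SigM_mul_betaM (j : Fin 3) : SigM j * betaM = betaM * SigM j := by
  simp [SigM, betaM, qblock_mul]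

lemma isPauliTriple_SigM : IsPauliTriple SigM where
  mul_self j := by
    simp [SigM, qblock_mul, isPauliTriple_pauli.mul_self, qblock_one]
  mul_succ j := by
    simp [SigM, qblock_mul, isPauliTriple_pauli.mul_succ, smul_qblock]

end DiracMatrices

section Calculus

lemma differentiableAt_fderiv_of_contDiffAt_two {𝕜 E F : Type*} [NontriviallyNormedField 𝕜]
    [NormedAddCommGroup E] [NormedSpace 𝕜 E] [NormedAddCommGroup F] [NormedSpace 𝕜 F] {f : E → F}
    {x : E} (hf : ContDiffAt 𝕜 2 f x) : DifferentiableAt 𝕜 (fderiv 𝕜 f) x :=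
  (hf.fderiv_right (m := 1) one_add_one_eq_two.le).differentiableAt one_ne_zero

lemma hasFDerivAt_mulVec {n : Type*} [Fintype n] (M : Matrix n n ℂ) (v : n → ℂ) :
    HasFDerivAt (M *ᵥ ·) (M.mulVecLin.restrictScalars ℝ).toContinuousLinearMap v :=
  (M.mulVecLin.restrictScalars ℝ).toContinuousLinearMap.hasFDerivAt

lemma differentiableAt_mulVec {E n : Type*} [NormedAddCommGroup E] [NormedSpace ℝ E]
    [Fintype n] (M : Matrix n n ℂ) {f : E → n → ℂ} {x : E}
    (hf : DifferentiableAt ℝ f x) : DifferentiableAt ℝ (fun y => M *ᵥ f y) x :=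
  (hasFDerivAt_mulVec M (f x)).differentiableAt.comp x hf

end Calculus

section AngularMomentum

variable {ψ φ : E3 → Fin 4 → ℂ} {x : E3}

/-- The infinitesimal rotation `x ↦ eⱼ × x` about the `j`-th coordinate axis, the vector field along
which `i Lⱼ` differentiates. -/
def rotationGenerator (j : Fin 3) : E3 →L[ℝ] E3 :=
  (EuclideanSpace.proj (j + 1) : E3 →L[ℝ] ℝ).smulRight (EuclideanSpace.single (j + 2) 1) -
    (EuclideanSpace.proj (j + 2) : E3 →L[ℝ] ℝ).smulRight (EuclideanSpace.single (j + 1) 1)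

lemma lieBracket_rotationGenerator_succ (j : Fin 3) :
    VectorField.lieBracket ℝ (rotationGenerator j) (rotationGenerator (j + 1)) =
      -rotationGenerator (j + 2) := by
  ext x i
  simp only [VectorField.lieBracket, ContinuousLinearMap.fderiv]
  fin_cases j <;> fin_cases i <;> simp [rotationGenerator]

lemma Lop_eq_fderiv_rotationGenerator (j : Fin 3) (ψ : E3 → Fin 4 → ℂ) :
    Lop j ψ = fun x => -Complex.I • fderiv ℝ ψ x (rotationGenerator j x) := by
  funext x
  simp [Lop, pd, rotationGenerator]

lemma Lop_add (j : Fin 3) (hψ : DifferentiableAt ℝ ψ x) (hφ : DifferentiableAt ℝ φ x) :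
    Lop j (fun y => ψ y + φ y) x = Lop j ψ x + Lop j φ x := by
  simp only [Lop_eq_fderiv_rotationGenerator, fderiv_fun_add hψ hφ, _root_.add_apply, smul_add]

lemma Lop_sum {ι : Type*} (s : Finset ι) {f : ι → E3 → Fin 4 → ℂ} (j : Fin 3)
    (hf : ∀ k ∈ s, DifferentiableAt ℝ (f k) x) :
    Lop j (fun y => ∑ k ∈ s, f k y) x = ∑ k ∈ s, Lop j (f k) x := by
  simp only [Lop_eq_fderiv_rotationGenerator, fderiv_fun_sum hf, _root_.sum_apply, Finset.smul_sum]

lemma Lop_mulVec (M : Matrix (Fin 4) (Fin 4) ℂ) (j : Fin 3) (hψ : DifferentiableAt ℝ ψ x) :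
    Lop j (fun y => M *ᵥ ψ y) x = M *ᵥ Lop j ψ x := by
  have hM := (hasFDerivAt_mulVec M (ψ x)).comp x hψ.hasFDerivAt
  simp only [Lop_eq_fderiv_rotationGenerator, mulVec_smul]
  exact congrArg (fun D => -Complex.I • D (rotationGenerator j x)) hM.fderiv

lemma differentiableAt_Lop (j : Fin 3) (hψ : ContDiffAt ℝ 2 ψ x) :
    DifferentiableAt ℝ (Lop j ψ) x := by
  have hD := differentiableAt_fderiv_of_contDiffAt_two hψ
  rw [Lop_eq_fderiv_rotationGenerator]
  fun_prop

lemma Lop_Lop (j k : Fin 3) (hψ : ContDiffAt ℝ 2 ψ x) :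
    Lop j (Lop k ψ) x =
      -fderiv ℝ (fun y => fderiv ℝ ψ y (rotationGenerator k y)) x (rotationGenerator j x) := by
  have hD := differentiableAt_fderiv_of_contDiffAt_two hψ
  simp only [Lop_eq_fderiv_rotationGenerator]
  rw [fderiv_fun_const_smul (by fun_prop), _root_.smul_apply, smul_smul, neg_mul_neg,
    Complex.I_mul_I, neg_one_smul]

lemma Lop_commutator (j : Fin 3) (hψ : ContDiffAt ℝ 2 ψ x) :
    Lop j (Lop (j + 1) ψ) x - Lop (j + 1) (Lop j ψ) x = Complex.I • Lop (j + 2) ψ x := by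
  have bracket := VectorField.fderiv_apply_lieBracket hψ minSmoothness_of_isRCLikeNormedField.le
    (rotationGenerator (j + 1)).differentiableAt (rotationGenerator j).differentiableAt
  rw [Lop_Lop _ _ hψ, Lop_Lop _ _ hψ, neg_sub_neg, ← neg_sub, ← bracket,
    lieBracket_rotationGenerator_succ, Pi.neg_apply, map_neg, neg_neg,
    Lop_eq_fderiv_rotationGenerator, smul_smul, mul_neg, Complex.I_mul_I, neg_neg, one_smul]

end AngularMomentum

section DiracOperator

variable {ψ φ : E3 → Fin 4 → ℂ} {x : E3}

lemma SigL_add (hψ : DifferentiableAt ℝ ψ x) (hφ : DifferentiableAt ℝ φ x) :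
    SigL (fun y => ψ y + φ y) x = SigL ψ x + SigL φ x := by
  simp only [SigL, Lop_add _ hψ hφ, mulVec_add, Finset.sum_add_distrib]

lemma SigL_betaM_mulVec (hψ : DifferentiableAt ℝ ψ x) :
    SigL (fun y => betaM *ᵥ ψ y) x = betaM *ᵥ SigL ψ x := by
  simp only [SigL, Lop_mulVec _ _ hψ, mulVec_sum, mulVec_mulVec, SigM_mul_betaM]

lemma differentiableAt_SigL (hψ : ContDiffAt ℝ 2 ψ x) : DifferentiableAt ℝ (SigL ψ) x :=
  DifferentiableAt.fun_sum fun j _ => differentiableAt_mulVec _ (differentiableAt_Lop j hψ)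

lemma Lop_SigL (j : Fin 3) (hψ : ContDiffAt ℝ 2 ψ x) :
    Lop j (SigL ψ) x = ∑ k, SigM k *ᵥ Lop j (Lop k ψ) x := by
  have hL (k : Fin 3) := differentiableAt_Lop k hψ
  unfold SigL
  simp only [Lop_sum _ _ fun k _ => differentiableAt_mulVec (SigM k) (hL k),
    fun k => Lop_mulVec (SigM k) j (hL k)]

lemma SigL_SigL (hψ : ContDiffAt ℝ 2 ψ x) : SigL (SigL ψ) x = L2op ψ x - SigL ψ x := by
  rw [SigL]
  simp only [Lop_SigL _ hψ]
  exact isPauliTriple_SigM.sum_mulVec_sum_mulVec fun j => Lop_commutator j hψ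

lemma SigL_Kop (hψ : ContDiffAt ℝ 2 ψ x) : SigL (Kop ψ) x = betaM *ᵥ L2op ψ x := by
  have hd : DifferentiableAt ℝ ψ x := hψ.differentiableAt two_ne_zero
  have hS := differentiableAt_SigL hψ
  calc SigL (Kop ψ) x
      = betaM *ᵥ SigL (fun y => ψ y + SigL ψ y) x := SigL_betaM_mulVec (hd.fun_add hS)
    _ = betaM *ᵥ L2op ψ x := by rw [SigL_add hd hS, SigL_SigL hψ, add_sub_cancel]

lemma Kop_Kop (hψ : ContDiffAt ℝ 2 ψ x) :
    Kop (Kop ψ) x = L2op ψ x + betaM *ᵥ Kop ψ x := by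
  rw [Kop, SigL_Kop hψ, mulVec_add, mulVec_mulVec, betaM_mul_self, one_mulVec, add_comm]

lemma Kop_betaM_mulVec (hψ : DifferentiableAt ℝ ψ x) :
    Kop (fun y => betaM *ᵥ ψ y) x = betaM *ᵥ Kop ψ x := by
  simp only [Kop, SigL_betaM_mulVec hψ, mulVec_add]

end DiracOperator

theorem Kop_sq_and_Kop_comm_beta_general {ψ : E3 → Fin 4 → ℂ} {x : E3}
    (hψ : ContDiffAt ℝ 2 ψ x) :
    Kop (Kop ψ) x = L2op ψ x + betaM *ᵥ Kop ψ x ∧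
      betaM *ᵥ Kop ψ x = Kop (fun y => betaM *ᵥ ψ y) x :=
  ⟨Kop_Kop hψ, (Kop_betaM_mulVec (hψ.differentiableAt two_ne_zero)).symm⟩

/-- For smooth `ψ : ℝ³ → ℂ⁴`, Dirac's operator `K = β(Id + Σ·L)` satisfies
`K(Kψ) = L²ψ + β(Kψ)`, and `K` commutes with `β`. -/
theorem Kop_sq_and_Kop_comm_beta (ψ : E3 → Fin 4 → ℂ) (hψ : ContDiff ℝ (⊤ : ℕ∞) ψ) (x : E3) :
    Kop (Kop ψ) x = L2op ψ x + betaM.mulVec (Kop ψ x) ∧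
      betaM.mulVec (Kop ψ x) = Kop (fun y => betaM.mulVec (ψ y)) x := by
  exact Kop_sq_and_Kop_comm_beta_general
    (hψ.contDiffAt.of_le (WithTop.coe_le_coe.2 (le_top : (2 : ℕ∞) ≤ ⊤)))

end
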